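/- Let H be a complex Hilbert space and (T_h) a family of bounded operators converging in operator norm to a compact operator T on H. Let λ ≠ 0 be an eigenvalue of the eigenproblem T u = λ⁻¹ u with ascent 1. Then for h small enough there exist eigenvalues λ_h of T_h u_h = λ_h⁻¹ u_h with λ_h → λ, and for each normalized eigenvector u_h of T_h corresponding to λ_h there is an eigenvector u of T corresponding to λ with ‖u_h - u‖ → 0 as h → 0. -/

import Mathlib

open Filter Topology

/-!
Infinitely many eigenvalues of a compact operator `T` cannot stay away from `0`, by Riesz's lemma
along the flag spanned by their eigenvectors. With the Fredholm alternative, every nonzero spectral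
value `μ` of `T` is isolated, so small circles around `μ` lie in the resolvent set of `T`, and the
resolvents of all operators `S` near `T` are uniformly bounded on such a circle. If `S` had no
spectrum inside, the maximum principle would carry this bound to `resolvent S μ`, and a Neumann
series would make `μ - T` invertible. Hence the spectrum of `S` meets every neighbourhood of `μ`. As
`z - S = (z - (S - T)) - T` is an invertible operator minus a compact one when `‖S - T‖ < ‖z‖`,
these spectral values are eigenvalues. Finally, unit eigenvectors `x` of `S` satisfy
`μ • x - T x → 0`, and compactness of `T` drives them to the eigenspace of `T` at `μ`.
-/

open Module End

section Metric

variable {ι E : Type*} [PseudoMetricSpace E]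

theorem exists_mem_dist_le_two_mul_infDist {s : Set E} (hs : IsClosed s) (hne : s.Nonempty)
    (x : E) : ∃ y ∈ s, dist x y ≤ 2 * Metric.infDist x s := by
  rcases (Metric.infDist_nonneg (x := x) (s := s)).eq_or_lt with h0 | hpos
  · exact ⟨x, (hs.mem_iff_infDist_zero hne).2 h0.symm, by simp [Metric.infDist_nonneg]⟩
  · obtain ⟨y, hy, hxy⟩ := (Metric.infDist_lt_iff hne).1 (lt_two_mul_self hpos)
    exact ⟨y, hy, hxy.le⟩

theorem exists_tendsto_of_forall_eventually_inter_nonempty {l : Filter ι} {s : ι → Set E} {x : E}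
    (hs : ∀ i, IsClosed (s i)) (hx : ∀ U ∈ 𝓝 x, ∀ᶠ i in l, (s i ∩ U).Nonempty) :
    ∃ y : ι → E, Tendsto y l (𝓝 x) ∧ ∀ᶠ i in l, y i ∈ s i := by
  have hnear (i : ι) : ∃ y, (s i).Nonempty → y ∈ s i ∧ dist x y ≤ 2 * Metric.infDist x (s i) := by
    by_cases hne : (s i).Nonempty
    · obtain ⟨y, hy⟩ := exists_mem_dist_le_two_mul_infDist (hs i) hne x
      exact ⟨y, fun _ ↦ hy⟩
    · exact ⟨x, fun h ↦ absurd h hne⟩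
  choose y hy using hnear
  refine ⟨y, Metric.tendsto_nhds.2 fun ε hε ↦ ?_, ?_⟩
  · filter_upwards [hx _ (Metric.ball_mem_nhds x (half_pos hε))] with i ⟨z, hzs, hzx⟩
    have hyz : dist x (y i) ≤ 2 * dist x z :=
      (hy i ⟨z, hzs⟩).2.trans (by gcongr; exact Metric.infDist_le_dist_of_mem hzs)
    rw [Metric.mem_ball, dist_comm] at hzx
    rw [dist_comm]
    linarith
  · filter_upwards [hx _ univ_mem] with i hi
    exact (hy i hi.left).1

end Metric

section Resolvent

variable {A : Type*} [NormedRing A] [CompleteSpace A]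

theorem exists_eventually_forall_norm_resolvent_le {𝕜 : Type*} [NormedField 𝕜] [NormedAlgebra 𝕜 A]
    {a : A} {K : Set 𝕜} (hK : IsCompact K) (hKa : K ⊆ resolventSet 𝕜 a) :
    ∃ C, ∀ᶠ b in 𝓝 a, ∀ z ∈ K, ‖resolvent b z‖ ≤ C := by
  have hcont : ∀ z ∈ K, ContinuousAt (fun p : A × 𝕜 ↦ resolvent p.1 p.2) (a, z) := fun z hz ↦ by
    obtain ⟨v, hv⟩ := hKa hz
    have hinv : ContinuousAt Ring.inverse (algebraMap 𝕜 A z - a) :=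
      hv ▸ NormedRing.inverse_continuousAt v
    exact ContinuousAt.comp' (f := fun p : A × 𝕜 ↦ algebraMap 𝕜 A p.2 - p.1) hinv
      (by fun_prop)
  obtain ⟨C, hC⟩ := hK.exists_bound_of_continuousOn (f := resolvent a) fun z hz ↦
    (ContinuousAt.comp' (f := fun w ↦ (a, w)) (hcont z hz) (by fun_prop)).continuousWithinAt
  refine ⟨C + 1, hK.eventually_forall_of_forall_eventually fun z hz ↦ ?_⟩
  exact ((hcont z hz).norm.eventually_lt_const ((hC z hz).trans_lt (lt_add_one C))).mono
    fun _ h ↦ h.le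

theorem mem_resolventSet_of_norm_resolvent_mul_norm_sub_lt_one {R : Type*} [CommSemiring R]
    [Algebra R A] {a b : A} {z : R} (hz : z ∈ resolventSet R b)
    (h : ‖resolvent b z‖ * ‖a - b‖ < 1) : z ∈ resolventSet R a := by
  have hfactor : algebraMap R A z - a =
      (algebraMap R A z - b) * (1 - resolvent b z * (a - b)) := by
    rw [mul_sub, mul_one, ← mul_assoc, resolvent, Ring.mul_inverse_cancel _ hz, one_mul]
    abel
  rw [spectrum.mem_resolventSet_iff, hfactor]
  exact hz.mul (isUnit_one_sub_of_norm_lt_one ((norm_mul_le _ _).trans_lt h))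

theorem norm_resolvent_le_of_forall_mem_sphere [NormedAlgebra ℂ A] {a : A} {c : ℂ} {r C : ℝ}
    (hr : 0 < r) (ha : Metric.closedBall c r ⊆ resolventSet ℂ a)
    (hC : ∀ z ∈ Metric.sphere c r, ‖resolvent a z‖ ≤ C) : ‖resolvent a c‖ ≤ C := by
  have hdiff : DifferentiableOn ℂ (resolvent a) (Metric.closedBall c r) := fun z hz ↦
    (spectrum.hasDerivAt_resolvent_const_left (ha hz)).differentiableAt.differentiableWithinAt
  refine Complex.norm_le_of_forall_mem_frontier_norm_le Metric.isBounded_ball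
    (DifferentiableOn.diffContOnCl (by rwa [closure_ball c hr.ne'])) ?_
    (subset_closure (Metric.mem_ball_self hr))
  rwa [frontier_ball c hr.ne']

theorem eventually_spectrum_inter_nonempty_of_isolated [NormedAlgebra ℂ A] {a : A} {μ : ℂ}
    (hμ : μ ∈ spectrum ℂ a) (hiso : ∀ᶠ z in 𝓝[≠] μ, z ∈ resolventSet ℂ a) {U : Set ℂ}
    (hU : U ∈ 𝓝 μ) : ∀ᶠ b in 𝓝 a, (spectrum ℂ b ∩ U).Nonempty := by
  obtain ⟨r, hr, hrU⟩ := Metric.nhds_basis_closedBall.mem_iff.1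
    (inter_mem hU (eventually_nhdsWithin_iff.1 hiso))
  have hsphere : Metric.sphere μ r ⊆ resolventSet ℂ a := fun z hz ↦
    (hrU (Metric.sphere_subset_closedBall hz)).2 (Metric.ne_of_mem_sphere hz hr.ne')
  obtain ⟨C, hC⟩ := exists_eventually_forall_norm_resolvent_le (isCompact_sphere μ r) hsphere
  have hsmall : Tendsto (fun b ↦ C * ‖a - b‖) (𝓝 a) (𝓝 0) := by
    have : Continuous fun b ↦ C * ‖a - b‖ := by fun_prop
    simpa using this.tendsto a
  filter_upwards [hC, hsmall.eventually_lt_const one_pos] with b hbC hb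
  by_contra hempty
  have hball : Metric.closedBall μ r ⊆ resolventSet ℂ b := fun z hz ↦
    by_contra fun hzb ↦ hempty ⟨z, hzb, (hrU hz).1⟩
  refine hμ (mem_resolventSet_of_norm_resolvent_mul_norm_sub_lt_one
    (hball (Metric.mem_closedBall_self hr.le)) (lt_of_le_of_lt ?_ hb))
  gcongr
  exact norm_resolvent_le_of_forall_mem_sphere hr hball hbC

end Resolvent

theorem exists_strictMono_finiteDimensional_of_hasEigenvector {K E : Type*} [Field K]
    [AddCommGroup E] [Module K E] {T : End K E} {z : ℕ → K} (hz : z.Injective) {v : ℕ → E}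
    (hv : ∀ n, HasEigenvector T (z n) (v n)) :
    ∃ V : ℕ → Submodule K E, StrictMono V ∧ (∀ n, FiniteDimensional K (V n)) ∧
      ∀ n, ∀ x ∈ V (n + 1), T x - z n • x ∈ V n := by
  let V (n : ℕ) : Submodule K E := Submodule.span K (v '' Set.Iio n)
  have hvV {k n : ℕ} (hk : k < n) : v k ∈ V n := Submodule.subset_span ⟨k, hk, rfl⟩
  refine ⟨V, strictMono_nat_of_lt_succ fun n ↦ SetLike.lt_iff_le_and_exists.2 ⟨?_, v n, ?_, ?_⟩,
    fun n ↦ FiniteDimensional.span_of_finite K ((Set.finite_Iio n).image v), fun n ↦ ?_⟩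
  · exact Submodule.span_mono (Set.image_mono (Set.Iio_subset_Iio n.le_succ))
  · exact hvV n.lt_succ_self
  · exact (eigenvectors_linearIndependent' T z hz v hv).notMem_span_image (by simp)
  · suffices V (n + 1) ≤ (V n).comap (T - z n • 1) by simpa [SetLike.le_def] using this
    refine Submodule.span_le.2 ?_
    rintro _ ⟨k, hk, rfl⟩
    have hTk : (T - z n • 1) (v k) = (z k - z n) • v k := by
      simp [(hv k).apply_eq_smul, sub_smul]
    rw [SetLike.mem_coe, Submodule.mem_comap, hTk]
    rcases (Nat.lt_succ_iff.1 hk).eq_or_lt with rfl | hkn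
    · simp
    · exact (V n).smul_mem _ (hvV hkn)

section CompactOperator

variable {𝕜 X : Type*} [NontriviallyNormedField 𝕜] [NormedAddCommGroup X] [NormedSpace 𝕜 X]

theorem exists_bounded_one_le_norm_sub_of_strictMono {V : ℕ → Submodule 𝕜 X} (hV : StrictMono V)
    (hclosed : ∀ n, IsClosed (V n : Set X)) :
    ∃ (R : ℝ) (y : ℕ → X), (∀ n, ‖y n‖ ≤ R) ∧ (∀ n, y n ∈ V (n + 1)) ∧
      ∀ n, ∀ w ∈ V n, 1 ≤ ‖y n - w‖ := by
  obtain ⟨c, hc⟩ := NormedField.exists_one_lt_norm 𝕜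
  have hriesz (n : ℕ) : ∃ y, ‖y‖ ≤ ‖c‖ + 1 ∧ y ∈ V (n + 1) ∧ ∀ w ∈ V n, 1 ≤ ‖y - w‖ := by
    obtain ⟨hle, v, hv, hvn⟩ := SetLike.lt_iff_le_and_exists.1 (hV n.lt_succ_self)
    have hcomap : IsClosed ((V n).comap (V (n + 1)).subtype : Set (V (n + 1))) :=
      (hclosed n).preimage continuous_subtype_val
    obtain ⟨y, hyR, hy⟩ := riesz_lemma_of_norm_lt hc (lt_add_one ‖c‖) hcomap ⟨⟨v, hv⟩, hvn⟩
    exact ⟨y, hyR, y.2, fun w hw ↦ hy ⟨w, hle hw⟩ hw⟩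
  choose y hyR hyV hy using hriesz
  exact ⟨‖c‖ + 1, y, hyR, hyV, hy⟩

theorem norm_le_norm_apply_sub_apply_of_sub_smul_mem {T : End 𝕜 X} {V : Submodule 𝕜 X} {z : 𝕜}
    {x y : X} (hx : T x - z • x ∈ V) (hy : T y ∈ V) (hxV : ∀ w ∈ V, 1 ≤ ‖x - w‖) :
    ‖z‖ ≤ ‖T x - T y‖ := by
  rcases eq_or_ne z 0 with rfl | hz
  · simp
  let w := z⁻¹ • (T y - (T x - z • x))
  have hw : w ∈ V := V.smul_mem _ (V.sub_mem hy hx)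
  calc ‖z‖ ≤ ‖z‖ * ‖x - w‖ := le_mul_of_one_le_right (norm_nonneg z) (hxV w hw)
    _ = ‖T x - T y‖ := by
      rw [← norm_smul, smul_sub, smul_inv_smul₀ hz]
      congr 1
      abel

theorem exists_bounded_norm_le_norm_sub_of_hasEigenvector [CompleteSpace 𝕜] {T : End 𝕜 X}
    {z : ℕ → 𝕜} (hz : z.Injective) {v : ℕ → X} (hv : ∀ n, HasEigenvector T (z n) (v n)) :
    ∃ (R : ℝ) (y : ℕ → X), (∀ n, ‖y n‖ ≤ R) ∧ ∀ m n, m < n → ‖z n‖ ≤ ‖T (y n) - T (y m)‖ := by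
  obtain ⟨V, hV, hfin, hTV⟩ := exists_strictMono_finiteDimensional_of_hasEigenvector hz hv
  obtain ⟨R, y, hyR, hyV, hy⟩ := exists_bounded_one_le_norm_sub_of_strictMono hV
    fun n ↦ (V n).closed_of_finiteDimensional
  refine ⟨R, y, hyR, fun m n hmn ↦
    norm_le_norm_apply_sub_apply_of_sub_smul_mem (hTV n _ (hyV n)) ?_ (hy n)⟩
  have hTy : T (y m) ∈ V (m + 1) :=
    ((V (m + 1)).sub_mem_iff_left ((V (m + 1)).smul_mem (z m) (hyV m))).1
      (hV.monotone m.le_succ (hTV m _ (hyV m)))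
  exact hV.monotone hmn hTy

theorem finite_setOf_hasEigenvalue_of_le_norm [CompleteSpace 𝕜] {T : X →L[𝕜] X}
    (hT : IsCompactOperator T) {ε : ℝ} (hε : 0 < ε) :
    {z : 𝕜 | HasEigenvalue (T : End 𝕜 X) z ∧ ε ≤ ‖z‖}.Finite := by
  by_contra hinf
  let z := Set.Infinite.natEmbedding _ hinf
  choose v hv using fun n ↦ (z n).2.1.exists_hasEigenvector
  obtain ⟨R, y, hyR, hy⟩ := exists_bounded_norm_le_norm_sub_of_hasEigenvector
    (Subtype.val_injective.comp z.injective) hv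
  obtain ⟨K, hK, hTK⟩ := hT.image_closedBall_subset_compact R
  obtain ⟨w, -, φ, hφ, hw⟩ := hK.tendsto_subseq (x := fun n ↦ T (y n))
    fun n ↦ hTK ⟨y n, by simpa using hyR n, rfl⟩
  obtain ⟨N, hN⟩ := Metric.cauchySeq_iff'.1 hw.cauchySeq ε hε
  have hlt : ‖T (y (φ (N + 1))) - T (y (φ N))‖ < ε := by
    simpa [dist_eq_norm] using hN (N + 1) N.le_succ
  exact hlt.not_ge ((z _).2.2.trans (hy _ _ (hφ N.lt_succ_self)))

theorem tendsto_infDist_eigenspace {ι : Type*} {l : Filter ι} {T : X →L[𝕜] X}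
    (hT : IsCompactOperator T) {μ : 𝕜} (hμ : μ ≠ 0) {x : ι → X} {M : ℝ}
    (hxM : ∀ᶠ i in l, ‖x i‖ ≤ M) (hx : Tendsto (fun i ↦ μ • x i - T (x i)) l (𝓝 0)) :
    Tendsto (fun i ↦ Metric.infDist (x i) (eigenspace (T : End 𝕜 X) μ)) l (𝓝 0) := by
  obtain ⟨K, hK, hTK⟩ := hT.image_closedBall_subset_compact M
  refine tendsto_iff_ultrafilter _ _ _ |>.2 fun g hg ↦ ?_
  have hmem : ∀ᶠ i in (g : Filter ι), T (x i) ∈ K :=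
    hg (hxM.mono fun i hi ↦ hTK ⟨x i, by simpa using hi, rfl⟩)
  obtain ⟨v, -, hv⟩ := hK.ultrafilter_le_nhds (g.map fun i ↦ T (x i)) (le_principal_iff.2 hmem)
  have hlim : Tendsto x g (𝓝 (μ⁻¹ • v)) := by
    have hsum := ((hx.mono_left hg).add hv).const_smul μ⁻¹
    simpa [inv_smul_smul₀ hμ] using hsum
  have heig : μ⁻¹ • v ∈ eigenspace (T : End 𝕜 X) μ := by
    rw [mem_eigenspace_iff, smul_inv_smul₀ hμ]
    exact tendsto_nhds_unique ((T.continuous.tendsto _).comp hlim) hv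
  rw [← Metric.infDist_zero_of_mem (s := (eigenspace (T : End 𝕜 X) μ : Set X)) heig]
  exact ((Metric.continuous_infDist_pt _).tendsto _).comp hlim

theorem tendsto_smul_sub_apply_of_eigenvector {ι : Type*} {l : Filter ι} {T : X →L[𝕜] X}
    {S : ι → X →L[𝕜] X} (hS : Tendsto S l (𝓝 T)) {μ : 𝕜} {ν : ι → 𝕜} (hν : Tendsto ν l (𝓝 μ))
    {x : ι → X} (hx : ∀ᶠ i in l, ‖x i‖ = 1 ∧ S i (x i) = ν i • x i) :
    Tendsto (fun i ↦ μ • x i - T (x i)) l (𝓝 0) := by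
  have hbound : Tendsto (fun i ↦ ‖S i - T‖ + ‖ν i - μ‖) l (𝓝 0) := by
    simpa using (tendsto_iff_norm_sub_tendsto_zero.1 hS).add
      (tendsto_iff_norm_sub_tendsto_zero.1 hν)
  refine squeeze_zero_norm' ?_ hbound
  filter_upwards [hx] with i ⟨hi, hSi⟩
  calc ‖μ • x i - T (x i)‖ = ‖(S i - T) (x i) - (ν i - μ) • x i‖ := by
        rw [sub_apply, hSi, sub_smul]
        congr 1
        abel
    _ ≤ ‖(S i - T) (x i)‖ + ‖(ν i - μ) • x i‖ := norm_sub_le _ _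
    _ ≤ ‖S i - T‖ + ‖ν i - μ‖ := by
        grw [(S i - T).le_opNorm, norm_smul, hi, mul_one, mul_one]

theorem exists_hasEigenvector_tendsto_norm_sub {ι : Type*} {l : Filter ι} {T : X →L[𝕜] X}
    (hT : IsCompactOperator T) {S : ι → X →L[𝕜] X} (hS : Tendsto S l (𝓝 T)) {μ : 𝕜} (hμ : μ ≠ 0)
    (hTμ : HasEigenvalue (T : End 𝕜 X) μ) {ν : ι → 𝕜} (hν : Tendsto ν l (𝓝 μ)) {x : ι → X}
    (hx : ∀ᶠ i in l, ‖x i‖ = 1 ∧ S i (x i) = ν i • x i) :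
    ∃ u : ι → X, (∀ i, HasEigenvector (T : End 𝕜 X) μ (u i)) ∧
      Tendsto (fun i ↦ ‖x i - u i‖) l (𝓝 0) := by
  classical
  obtain ⟨u₀, hu₀⟩ := hTμ.exists_hasEigenvector
  choose p hp hxp using fun i ↦
    exists_mem_dist_le_two_mul_infDist (T.isClosed_eigenspace μ) ⟨0, zero_mem _⟩ (x i)
  have hdist : Tendsto (fun i ↦ ‖x i - p i‖) l (𝓝 0) := by
    have hinf := tendsto_infDist_eigenspace hT hμ (hx.mono fun _ hi ↦ hi.1.le)
      (tendsto_smul_sub_apply_of_eigenvector hS hν hx)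
    refine squeeze_zero (fun _ ↦ norm_nonneg _) (fun i ↦ ?_) (by simpa using hinf.const_mul 2)
    simpa only [dist_eq_norm] using hxp i
  have hp0 : ∀ᶠ i in l, p i ≠ 0 := by
    filter_upwards [hx, hdist.eventually_lt_const one_pos] with i hi hlt h0
    simp [h0, hi.1] at hlt
  refine ⟨fun i ↦ if p i = 0 then u₀ else p i, fun i ↦ ?_, hdist.congr' ?_⟩
  · beta_reduce
    split_ifs with h0
    exacts [hu₀, ⟨hp i, h0⟩]
  · filter_upwards [hp0] with i hi
    rw [if_neg hi]

variable [CompleteSpace X]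

theorem eventually_mem_resolventSet_of_isCompactOperator [CompleteSpace 𝕜] {T : X →L[𝕜] X}
    (hT : IsCompactOperator T) {μ : 𝕜} (hμ : μ ≠ 0) :
    ∀ᶠ z in 𝓝[≠] μ, z ∈ resolventSet 𝕜 T := by
  have hhalf : 0 < ‖μ‖ / 2 := half_pos (norm_pos_iff.2 hμ)
  have hfinite := (finite_setOf_hasEigenvalue_of_le_norm hT hhalf).subset
    (Set.sdiff_subset (t := {μ}))
  have hlarge : ∀ᶠ z in 𝓝 μ, ‖μ‖ / 2 < ‖z‖ :=
    continuous_norm.tendsto μ |>.eventually_const_lt (half_lt_self (norm_pos_iff.2 hμ))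
  have havoid := hfinite.isClosed.isOpen_compl.mem_nhds fun h : μ ∈ _ ↦ h.2 rfl
  rw [eventually_nhdsWithin_iff]
  filter_upwards [hlarge, havoid] with z hz hza hzμ
  exact (hT.hasEigenvalue_or_mem_resolventSet (norm_pos_iff.1 (hhalf.trans hz))).resolve_left
    fun h ↦ hza ⟨⟨h, hz.le⟩, hzμ⟩

theorem hasEigenvalue_of_mem_spectrum_of_isCompactOperator_sub {S R : X →L[𝕜] X} {z : 𝕜}
    (hSR : IsCompactOperator (S - R)) (hR : z ∈ resolventSet 𝕜 R) (hS : z ∈ spectrum 𝕜 S) :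
    HasEigenvalue (S : End 𝕜 X) z := by
  obtain ⟨G, hG⟩ := hR
  have hfactor : algebraMap 𝕜 (X →L[𝕜] X) z - S =
      G * (algebraMap 𝕜 (X →L[𝕜] X) 1 - ↑G⁻¹ * (S - R)) := by
    rw [mul_sub, ← mul_assoc, Units.mul_inv, hG, map_one, mul_one, one_mul]
    abel
  have hcompact : IsCompactOperator (↑G⁻¹ * (S - R) : X →L[𝕜] X) := hSR.clm_comp _
  rcases hcompact.hasEigenvalue_or_mem_resolventSet one_ne_zero with heig | hres
  · obtain ⟨x, hx⟩ := heig.exists_hasEigenvector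
    have hker : (algebraMap 𝕜 (X →L[𝕜] X) z - S) x = 0 := by
      have hx1 : (↑G⁻¹ * (S - R) : X →L[𝕜] X) x = x := by simpa using hx.apply_eq_smul
      rw [hfactor, mul_apply_eq_comp, sub_apply, hx1]
      simp
    refine hasEigenvalue_of_hasEigenvector ⟨mem_eigenspace_iff.2 ?_, hx.2⟩
    exact (sub_eq_zero.1 hker).symm
  · refine absurd ?_ hS
    rw [spectrum.mem_resolventSet_iff, hfactor]
    exact G.isUnit.mul hres

end CompactOperator

section SpectralApproximation

variable {ι X : Type*} [NormedAddCommGroup X] [NormedSpace ℂ X] [CompleteSpace X] {l : Filter ι}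

theorem exists_tendsto_hasEigenvalue {T : X →L[ℂ] X} (hT : IsCompactOperator T)
    {S : ι → X →L[ℂ] X} (hS : Tendsto S l (𝓝 T)) {μ : ℂ} (hμ : μ ≠ 0)
    (hTμ : HasEigenvalue (T : End ℂ X) μ) :
    ∃ ν : ι → ℂ, Tendsto ν l (𝓝 μ) ∧ ∀ᶠ i in l, HasEigenvalue (S i : End ℂ X) (ν i) := by
  have hspec : μ ∈ spectrum ℂ T := (hT.hasEigenvalue_iff_mem_spectrum hμ).1 hTμ
  obtain ⟨ν, hν, hνS⟩ := exists_tendsto_of_forall_eventually_inter_nonempty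
    (fun i ↦ spectrum.isClosed (𝕜 := ℂ) (S i)) fun U hU ↦ hS.eventually
      (eventually_spectrum_inter_nonempty_of_isolated hspec
        (eventually_mem_resolventSet_of_isCompactOperator hT hμ) hU)
  have hlt : ∀ᶠ i in l, ‖S i - T‖ < ‖ν i‖ :=
    (tendsto_iff_norm_sub_tendsto_zero.1 hS).eventually_lt hν.norm (norm_pos_iff.2 hμ)
  have : Nontrivial X := hTμ.exists_hasEigenvector.elim fun x hx ↦ ⟨x, 0, hx.2⟩
  refine ⟨ν, hν, ?_⟩
  filter_upwards [hνS, hlt] with i hi hlti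
  exact hasEigenvalue_of_mem_spectrum_of_isCompactOperator_sub (R := S i - T) (by simpa using hT)
    (spectrum.mem_resolventSet_of_norm_lt hlti) hi

theorem stmt_12_general (T : X →L[ℂ] X) (hT : IsCompactOperator T) (Th : ι → X →L[ℂ] X)
    (hconv : Tendsto (fun h ↦ ‖Th h - T‖) l (𝓝 0)) (lam : ℂ) (hlam : lam ≠ 0)
    (u₀ : X) (hu₀ : u₀ ≠ 0) (hTu₀ : T u₀ = lam⁻¹ • u₀) :
    ∃ lamh : ι → ℂ,
      (∀ᶠ h in l, ∃ uh : X, uh ≠ 0 ∧ Th h uh = (lamh h)⁻¹ • uh) ∧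
      Tendsto lamh l (𝓝 lam) ∧
      ∀ uh : ι → X,
        (∀ᶠ h in l, ‖uh h‖ = 1 ∧ Th h (uh h) = (lamh h)⁻¹ • uh h) →
        ∃ u : ι → X,
          (∀ h, u h ≠ 0 ∧ T (u h) = lam⁻¹ • u h) ∧
          Tendsto (fun h ↦ ‖uh h - u h‖) l (𝓝 0) := by
  have hS : Tendsto Th l (𝓝 T) := tendsto_iff_norm_sub_tendsto_zero.2 hconv
  have hTμ : HasEigenvalue (T : End ℂ X) lam⁻¹ :=
    hasEigenvalue_of_hasEigenvector ⟨mem_eigenspace_iff.2 hTu₀, hu₀⟩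
  obtain ⟨ν, hν, heig⟩ := exists_tendsto_hasEigenvalue hT hS (inv_ne_zero hlam) hTμ
  refine ⟨fun h ↦ (ν h)⁻¹, heig.mono fun h hh ↦ ?_, by simpa using hν.inv₀ (inv_ne_zero hlam),
    fun uh huh ↦ ?_⟩
  · obtain ⟨uh, huh⟩ := hh.exists_hasEigenvector
    exact ⟨uh, huh.2, by simpa using huh.apply_eq_smul⟩
  · simp only [inv_inv] at huh
    obtain ⟨u, hu, hlim⟩ :=
      exists_hasEigenvector_tendsto_norm_sub hT hS (inv_ne_zero hlam) hTμ hν huh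
    exact ⟨u, fun h ↦ ⟨(hu h).2, (hu h).apply_eq_smul⟩, hlim⟩

end SpectralApproximation

/-- Spectral approximation (Babuška–Osborn): norm convergence `‖T - T_h‖ → 0`
to a compact operator implies convergence of discrete eigenvalues and
eigenfunctions for an eigenvalue `λ ≠ 0` of ascent 1. -/
theorem stmt_12 {H : Type*} [NormedAddCommGroup H] [InnerProductSpace ℂ H]
    [CompleteSpace H]
    (T : H →L[ℂ] H) (hT : IsCompactOperator T)
    (Th : ℕ → H →L[ℂ] H)
    (hconv : Tendsto (fun h => ‖Th h - T‖) atTop (𝓝 0))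
    (lam : ℂ) (hlam : lam ≠ 0)
    (u₀ : H) (hu₀ : u₀ ≠ 0) (hTu₀ : T u₀ = lam⁻¹ • u₀)
    (hascent : ∀ x : H, (lam⁻¹ • (1 : H →L[ℂ] H) - T) ((lam⁻¹ • (1 : H →L[ℂ] H) - T) x) = 0 →
      (lam⁻¹ • (1 : H →L[ℂ] H) - T) x = 0) :
    ∃ (N : ℕ) (lamh : ℕ → ℂ),
      (∀ h ≥ N, ∃ uh : H, uh ≠ 0 ∧ Th h uh = (lamh h)⁻¹ • uh) ∧
      Tendsto lamh atTop (𝓝 lam) ∧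
      ∀ uh : ℕ → H,
        (∀ h ≥ N, ‖uh h‖ = 1 ∧ Th h (uh h) = (lamh h)⁻¹ • uh h) →
        ∃ u : ℕ → H,
          (∀ h, u h ≠ 0 ∧ T (u h) = lam⁻¹ • u h) ∧
          Tendsto (fun h => ‖uh h - u h‖) atTop (𝓝 0) := by
  obtain ⟨lamh, heig, hlamh, hvec⟩ := stmt_12_general T hT Th hconv lam hlam u₀ hu₀ hTu₀
  obtain ⟨N, hN⟩ := eventually_atTop.1 heig
  exact ⟨N, lamh, hN, hlamh, fun uh huh ↦ hvec uh (eventually_atTop.2 ⟨N, huh⟩)⟩
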